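/- Let n ≥ 2 and let C_{2n} be the cycle graph on 2n vertices. The symmetric edge polytope SE(C_{2n}) is a polytope of dimension 2n−1 and has exactly binom(2n, n) facets; moreover, for every dimension d with d+1 < n, the number of d-dimensional faces of SE(C_{2n}) is binom(2n, d+1)·2^{d+1}. -/

import Mathlib

open scoped BigOperators

/-- The vector `ε_(v,w) = e_v - e_w` in `ℝ^V`. -/
def epsVec {V : Type*} [DecidableEq V] (e : V × V) : V → ℝ :=
  fun u => (if u = e.1 then (1 : ℝ) else 0) - (if u = e.2 then (1 : ℝ) else 0)

/-- The directed edge polytope of the quiver with edge set `E`. -/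
def DE {V : Type*} [DecidableEq V] (E : Set (V × V)) : Set (V → ℝ) :=
  convexHull ℝ (epsVec '' E)

/-- The edge relation of a quiver. -/
def edgeRel {V : Type*} (E : Set (V × V)) : V → V → Prop := fun a b => (a, b) ∈ E

/-- Number of connected components (with respect to undirected walks). -/
noncomputable def numComponents {V : Type*} (E : Set (V × V)) : ℕ :=
  Nat.card (Quot (Relation.EqvGen (edgeRel E)))

/-- `E` admits a rank function. -/
def HasRankFn {V : Type*} (E : Set (V × V)) : Prop :=
  ∃ ρ : V → ℝ, ∀ e ∈ E, ρ e.1 + 1 = ρ e.2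

open Classical in
/-- Dimension of a polytope: dimension of its affine hull, `-1` for the empty set. -/
noncomputable def polyDim {V : Type*} (s : Set (V → ℝ)) : ℤ :=
  if s = ∅ then -1 else (Module.finrank ℝ (affineSpan ℝ s).direction : ℤ)

/-- `F` is a face of `P`: `F = P` or `F` is the intersection of `P`
with a supporting hyperplane. -/
def IsFaceOf {V : Type*} (F P : Set (V → ℝ)) : Prop :=
  F = P ∨ ∃ (l : (V → ℝ) →ₗ[ℝ] ℝ) (c : ℝ), (∀ x ∈ P, l x ≤ c) ∧ F = {x ∈ P | l x = c}

/-- `F` is a facet of `P`: a face of dimension `dim P - 1`. -/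
def IsFacetOf {V : Type*} (F P : Set (V → ℝ)) : Prop :=
  IsFaceOf F P ∧ polyDim F = polyDim P - 1

/-- Each connected component of the subquiver `R1` is a full subquiver of `Q1`. -/
def ComponentsFull {V : Type*} (Q1 R1 : Set (V × V)) : Prop :=
  ∀ v w : V, Relation.EqvGen (edgeRel R1) v w → (v, w) ∈ Q1 → (v, w) ∈ R1

/-- Edge set of the contraction `Q/R`. -/
def contraction {V : Type*} (Q1 R1 : Set (V × V)) :
    Set (Quot (Relation.EqvGen (edgeRel R1)) × Quot (Relation.EqvGen (edgeRel R1))) :=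
  {p | ∃ e ∈ Q1 \ R1, p = (Quot.mk _ e.1, Quot.mk _ e.2)}

/-- A quiver is acyclic if it has no closed directed walk of length `> 1`. -/
def IsAcyclicQ {α : Type*} (E : Set (α × α)) : Prop :=
  ¬ ∃ (n : ℕ) (v : Fin (n + 1) → α), 1 < n ∧ v 0 = v (Fin.last n) ∧
      ∀ i : Fin n, (v i.castSucc, v i.succ) ∈ E

/-- The edge set of the double of the cycle graph on `ℤ/m`. -/
def cycleDoubleEdges (m : ℕ) : Set (ZMod m × ZMod m) :=
  {p : ZMod m × ZMod m | p.1 - p.2 = 1 ∨ p.2 - p.1 = 1}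

/-! The edge vectors `f i` of the oriented cycle on `m` vertices form a circuit: their only linear
relation, up to a factor, is `∑ i, f i = 0`. Hence linear functionals correspond, on these vectors,
to functions `g` on the edges with `∑ i, g i = 0`. A functional with `|g i| ≤ 1` cuts out of
`conv {± f i}` the face spanned by the `f i` with `i ∈ A := {g = 1}` and the `-f i` with
`i ∈ B := {g = -1}`. Averaging shows which disjoint pairs `(A, B)` arise: both sets have fewer than
`m / 2` elements, or both have exactly `m / 2`. Since any `m - 1` edge vectors are independent, this
face has dimension `min (|A| + |B|) (m - 1) - 1`. In low dimension the size restriction is automatic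
and each `(d + 1)`-set of edges is split freely into `A` and `B`; for `m = 2n` the facets are the
splittings of all edges into halves.
-/

section ConvexHull

variable {E : Type*} [AddCommGroup E] [Module ℝ E]

theorem convexHull_inter_hyperplane_of_le {S : Set E} {l : E →ₗ[ℝ] ℝ} {c : ℝ}
    (hl : ∀ v ∈ S, l v ≤ c) :
    {x ∈ convexHull ℝ S | l x = c} = convexHull ℝ {v ∈ S | l v = c} := by
  refine Set.Subset.antisymm ?_ (convexHull_min (Set.inter_subset_inter_left _
    (subset_convexHull ℝ S)) ((convex_convexHull ℝ S).inter (convex_hyperplane l.isLinear c)))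
  have hconv : Convex ℝ {x | l x ≤ c ∧ (l x = c → x ∈ convexHull ℝ {v ∈ S | l v = c})} := by
    rw [convex_iff_forall_pos]
    rintro x ⟨hx, hxmem⟩ y ⟨hy, hymem⟩ a b ha hb hab
    have hlxy : l (a • x + b • y) = a * l x + b * l y := by simp
    have hc : c = a * c + b * c := by rw [← add_mul, hab, one_mul]
    refine ⟨by rw [hlxy]; nlinarith, fun heq => ?_⟩
    rw [hlxy] at heq
    have hlx : l x = c := by nlinarith
    have hly : l y = c := by nlinarith
    exact convex_convexHull ℝ _ (hxmem hlx) (hymem hly) ha.le hb.le hab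
  rintro x ⟨hx, hlx⟩
  refine (convexHull_min (fun v hv => ?_) hconv hx).2 hlx
  exact ⟨hl v hv, fun hlv => subset_convexHull ℝ _ ⟨hv, hlv⟩⟩

theorem vectorSpan_le_span (S : Set E) : vectorSpan ℝ S ≤ Submodule.span ℝ S := by
  rw [vectorSpan_def, Submodule.span_le]
  rintro _ ⟨x, hx, y, hy, rfl⟩
  exact Submodule.sub_mem _ (Submodule.subset_span hx) (Submodule.subset_span hy)

theorem vectorSpan_eq_span_of_neg_mem {S : Set E} (hS : ∀ x ∈ S, -x ∈ S) :
    vectorSpan ℝ S = Submodule.span ℝ S := by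
  refine (vectorSpan_le_span S).antisymm (Submodule.span_le.2 fun x hx => ?_)
  have hmem := Submodule.smul_mem _ (2⁻¹ : ℝ) (vsub_mem_vectorSpan ℝ hx (hS x hx))
  rwa [vsub_eq_sub, sub_neg_eq_add, ← two_smul ℝ, inv_smul_smul₀ two_ne_zero] at hmem

theorem finrank_vectorSpan_add_one_of_forall_eq_one {S : Set E}
    [FiniteDimensional ℝ (Submodule.span ℝ S)] (hS : S.Nonempty) {l : E →ₗ[ℝ] ℝ}
    (hl : ∀ x ∈ S, l x = 1) :
    Module.finrank ℝ (vectorSpan ℝ S) + 1 = Module.finrank ℝ (Submodule.span ℝ S) := by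
  obtain ⟨x₀, hx₀⟩ := hS
  have hker : vectorSpan ℝ S ≤ LinearMap.ker l := by
    rw [vectorSpan_def, Submodule.span_le]
    rintro _ ⟨x, hx, y, hy, rfl⟩
    simp [hl x hx, hl y hy]
  have hx₀_notMem : x₀ ∉ vectorSpan ℝ S := fun hmem => by
    simpa [hl x₀ hx₀] using hker hmem
  have hsup : vectorSpan ℝ S ⊔ ℝ ∙ x₀ = Submodule.span ℝ S := by
    refine le_antisymm (sup_le (vectorSpan_le_span S)
      (Submodule.span_mono (Set.singleton_subset_iff.2 hx₀))) (Submodule.span_le.2 fun x hx => ?_)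
    rw [← sub_add_cancel x x₀]
    exact Submodule.add_mem_sup (vsub_mem_vectorSpan ℝ hx hx₀)
      (Submodule.mem_span_singleton_self x₀)
  have : FiniteDimensional ℝ (vectorSpan ℝ S) :=
    Submodule.finiteDimensional_of_le (vectorSpan_le_span S)
  have hdim := Submodule.finrank_sup_add_finrank_inf_eq (vectorSpan ℝ S) (ℝ ∙ x₀)
  have hx₀_ne : x₀ ≠ 0 := fun h0 => hx₀_notMem (h0 ▸ Submodule.zero_mem _)
  rw [hsup, (Submodule.disjoint_span_singleton_of_notMem hx₀_notMem).eq_bot, finrank_bot,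
    finrank_span_singleton hx₀_ne] at hdim
  exact hdim.symm

end ConvexHull

theorem polyDim_convexHull {V : Type*} {S : Set (V → ℝ)} (hS : S.Nonempty) :
    polyDim (convexHull ℝ S) = Module.finrank ℝ (vectorSpan ℝ S) := by
  rw [polyDim, if_neg (convexHull_eq_empty.not.2 hS.ne_empty), affineSpan_convexHull,
    direction_affineSpan]

theorem polyDim_convexHull_of_forall_eq_one {V : Type*} {S : Set (V → ℝ)}
    [FiniteDimensional ℝ (Submodule.span ℝ S)] {l : (V → ℝ) →ₗ[ℝ] ℝ} (hl : ∀ x ∈ S, l x = 1) :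
    polyDim (convexHull ℝ S) = Module.finrank ℝ (Submodule.span ℝ S) - 1 := by
  rcases S.eq_empty_or_nonempty with rfl | hS
  · rw [Submodule.span_empty, finrank_bot]
    simp [polyDim]
  · rw [polyDim_convexHull hS, ← finrank_vectorSpan_add_one_of_forall_eq_one hS hl]
    push_cast
    ring

section Circuit

variable {ι E : Type*} [Fintype ι] [AddCommGroup E] [Module ℝ E]

/-- The family `f` is a circuit of the linear matroid, scaled so that its only linear relation, up
to a factor, is `∑ i, f i = 0`; this is the only property of the edge vectors of an oriented cycle
that the face structure of its symmetric edge polytope depends on. -/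
def IsZeroSumCircuit (f : ι → E) : Prop :=
  LinearMap.ker (Fintype.linearCombination ℝ f) = ℝ ∙ (1 : ι → ℝ)

namespace IsZeroSumCircuit

variable {f : ι → E}

theorem sum_smul_eq_zero_iff (hf : IsZeroSumCircuit f) (c : ι → ℝ) :
    ∑ i, c i • f i = 0 ↔ ∃ a, ∀ i, c i = a := by
  rw [← Fintype.linearCombination_apply, ← LinearMap.mem_ker, hf, Submodule.mem_span_singleton]
  simp [funext_iff, eq_comm]

theorem exists_linearMap_apply_eq_iff (hf : IsZeroSumCircuit f) (g : ι → ℝ) :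
    (∃ l : E →ₗ[ℝ] ℝ, ∀ i, l (f i) = g i) ↔ ∑ i, g i = 0 := by
  classical
  have hsum : ∑ i, f i = 0 := by simpa using (hf.sum_smul_eq_zero_iff 1).2 ⟨1, fun _ => rfl⟩
  refine ⟨fun ⟨l, hl⟩ => by simp_rw [← hl, ← map_sum, hsum, map_zero], fun hg => ?_⟩
  have hann : Fintype.linearCombination ℝ g ∈
      LinearMap.range (Fintype.linearCombination ℝ f).dualMap := by
    rw [LinearMap.range_dualMap_eq_dualAnnihilator_ker, hf, Submodule.mem_dualAnnihilator]
    intro c hc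
    obtain ⟨a, rfl⟩ := Submodule.mem_span_singleton.1 hc
    simp [Fintype.linearCombination_apply, hg]
  obtain ⟨l, hl⟩ := hann
  exact ⟨l, fun i => by simpa using LinearMap.congr_fun hl (Pi.single i 1)⟩

theorem linearIndepOn (hf : IsZeroSumCircuit f) {T : Finset ι} (hT : T ≠ Finset.univ) :
    LinearIndepOn ℝ f (T : Set ι) := by
  classical
  rw [linearIndepOn_finset_iff]
  intro c hc i hi
  obtain ⟨j, hj⟩ : ∃ j, j ∉ T := by simpa [Finset.eq_univ_iff_forall] using hT
  obtain ⟨a, ha⟩ := (hf.sum_smul_eq_zero_iff fun i => if i ∈ T then c i else 0).1 (by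
    simpa [ite_smul, Finset.sum_ite_mem] using hc)
  simpa [hi, hj] using (ha i).trans (ha j).symm

theorem finrank_span_range [Nonempty ι] (hf : IsZeroSumCircuit f) :
    Module.finrank ℝ (Submodule.span ℝ (Set.range f)) + 1 = Fintype.card ι := by
  have hrank := (Fintype.linearCombination ℝ f).finrank_range_add_finrank_ker
  rwa [hf, finrank_span_singleton one_ne_zero, Fintype.range_linearCombination,
    Module.finrank_fintype_fun_eq_card] at hrank

theorem finrank_span_image [Nonempty ι] (hf : IsZeroSumCircuit f) (T : Finset ι) :
    Module.finrank ℝ (Submodule.span ℝ (f '' T)) = min T.card (Fintype.card ι - 1) := by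
  rcases eq_or_ne T Finset.univ with rfl | hT
  · rw [Finset.coe_univ, Set.image_univ, Finset.card_univ, min_eq_right (Nat.sub_le _ _),
      ← hf.finrank_span_range, Nat.add_sub_cancel]
  · rw [min_eq_left (Nat.le_sub_one_of_lt (T.card_lt_iff_ne_univ.2 hT)), Set.image_eq_range]
    exact (finrank_span_eq_card (hf.linearIndepOn hT)).trans (Fintype.card_coe T)

end IsZeroSumCircuit

end Circuit

section Balanced

variable {ι : Type*} [Fintype ι] {A B : Finset ι}

/-- The pair `(A, B)` consists of the level sets `g = 1` and `g = -1` of some `g : ι → [-1, 1]` of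
sum zero (see `isBalanced_iff_exists_weight`), expressed by cardinalities. For a zero-sum circuit
these pairs index the proper faces of the symmetric polytope, the empty face included. -/
def IsBalanced (A B : Finset ι) : Prop :=
  Disjoint A B ∧ (2 * A.card < Fintype.card ι ∧ 2 * B.card < Fintype.card ι ∨
    2 * A.card = Fintype.card ι ∧ 2 * B.card = Fintype.card ι)

theorem sum_compl_add_of_sum_eq_zero [DecidableEq ι] {g : ι → ℝ} {c : ℝ} (hsum : ∑ i, g i = 0)
    (hA : ∀ i ∈ A, g i = c) :
    ∑ i ∈ Aᶜ, (g i + c) = (Fintype.card ι - 2 * A.card) * c := by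
  have htotal : ∑ i, (g i + c) = Fintype.card ι * c := by
    simp [Finset.sum_add_distrib, hsum]
  have hsumA : ∑ i ∈ A, (g i + c) = 2 * A.card * c := by
    rw [Finset.sum_congr rfl fun i hi => by rw [hA i hi], Finset.sum_const, nsmul_eq_mul]
    ring
  linarith [Finset.sum_add_sum_compl A fun i => g i + c]

theorem two_mul_card_le_of_sum_eq_zero {g : ι → ℝ} {c : ℝ} (hc : 0 < c) (hsum : ∑ i, g i = 0)
    (hg : ∀ i, -c ≤ g i) (hA : ∀ i ∈ A, g i = c) : 2 * A.card ≤ Fintype.card ι := by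
  classical
  have hnonneg : 0 ≤ ∑ i ∈ Aᶜ, (g i + c) := Finset.sum_nonneg fun i _ => by linarith [hg i]
  rw [sum_compl_add_of_sum_eq_zero hsum hA] at hnonneg
  have := nonneg_of_mul_nonneg_left hnonneg hc
  rify
  linarith

theorem eq_neg_of_two_mul_card_eq {g : ι → ℝ} {c : ℝ} (hsum : ∑ i, g i = 0) (hg : ∀ i, -c ≤ g i)
    (hA : ∀ i ∈ A, g i = c) (hcard : 2 * A.card = Fintype.card ι) {i : ι} (hi : i ∉ A) :
    g i = -c := by
  classical
  have hzero : ∑ i ∈ Aᶜ, (g i + c) = 0 := by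
    rw [sum_compl_add_of_sum_eq_zero hsum hA, ← hcard]
    simp
  have hi_zero := (Finset.sum_eq_zero_iff_of_nonneg fun i _ => by linarith [hg i]).1 hzero i
    (Finset.mem_compl.2 hi)
  linarith

theorem isBalanced_of_weight {g : ι → ℝ} {c : ℝ} (hc : 0 < c) (hsum : ∑ i, g i = 0)
    (hg : ∀ i, |g i| ≤ c) (hA : ∀ i, i ∈ A ↔ g i = c) (hB : ∀ i, i ∈ B ↔ g i = -c) :
    IsBalanced A B := by
  classical
  have hsum' : ∑ i, (-g) i = 0 := by simp [hsum]
  have hlower : ∀ i, -c ≤ g i := fun i => (abs_le.1 (hg i)).1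
  have hlower' : ∀ i, -c ≤ (-g) i := fun i => neg_le_neg (abs_le.1 (hg i)).2
  have hA' : ∀ i ∈ A, g i = c := fun i hi => (hA i).1 hi
  have hB' : ∀ i ∈ B, (-g) i = c := fun i hi => by simp [(hB i).1 hi]
  have hA_le := two_mul_card_le_of_sum_eq_zero hc hsum hlower hA'
  have hB_le := two_mul_card_le_of_sum_eq_zero hc hsum' hlower' hB'
  have hA_half : 2 * A.card = Fintype.card ι → Aᶜ ⊆ B := fun hcard i hi =>
    (hB i).2 (eq_neg_of_two_mul_card_eq hsum hlower hA' hcard (Finset.mem_compl.1 hi))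
  have hB_half : 2 * B.card = Fintype.card ι → Bᶜ ⊆ A := fun hcard i hi =>
    (hA i).2 (neg_inj.1 (eq_neg_of_two_mul_card_eq hsum' hlower' hB' hcard (Finset.mem_compl.1 hi)))
  refine ⟨Finset.disjoint_left.2 fun i hiA hiB => ?_, ?_⟩
  · linarith [(hA i).1 hiA, (hB i).1 hiB]
  · have hA_card : 2 * A.card = Fintype.card ι → Fintype.card ι - A.card ≤ B.card := fun h => by
      simpa [Finset.card_compl] using Finset.card_le_card (hA_half h)
    have hB_card : 2 * B.card = Fintype.card ι → Fintype.card ι - B.card ≤ A.card := fun h => by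
      simpa [Finset.card_compl] using Finset.card_le_card (hB_half h)
    omega

theorem IsBalanced.exists_abs_lt_one_card_sub_card_add_eq_zero [DecidableEq ι]
    (h : IsBalanced A B) :
    ∃ q : ℝ, |q| < 1 ∧ A.card - B.card + (A ∪ B)ᶜ.card * q = 0 := by
  obtain ⟨hdisj, hcard⟩ := h
  have hrest : ((A ∪ B)ᶜ.card : ℝ) = Fintype.card ι - (A.card + B.card) := by
    rw [Finset.card_compl, Nat.cast_sub (Finset.card_le_univ _),
      Finset.card_union_of_disjoint hdisj, Nat.cast_add]
  rw [hrest]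
  rcases hcard with ⟨hA, hB⟩ | ⟨hA, hB⟩
  · rify at hA hB
    have hpos : (0 : ℝ) < Fintype.card ι - (A.card + B.card) := by linarith
    refine ⟨(B.card - A.card) / (Fintype.card ι - (A.card + B.card)), ?_, ?_⟩
    · rw [abs_div, abs_of_pos hpos, div_lt_one hpos, abs_lt]
      constructor <;> linarith
    · rw [mul_div_cancel₀ _ hpos.ne']
      ring
  · rify at hA hB
    exact ⟨0, by simp, by linarith⟩

theorem IsBalanced.exists_weight (h : IsBalanced A B) {c : ℝ} (hc : 0 < c) :
    ∃ g : ι → ℝ, ∑ i, g i = 0 ∧ (∀ i, |g i| ≤ c) ∧ (∀ i, i ∈ A ↔ g i = c) ∧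
      ∀ i, i ∈ B ↔ g i = -c := by
  classical
  obtain ⟨q, hq_lt, hq_sum⟩ := h.exists_abs_lt_one_card_sub_card_add_eq_zero
  have hdisj_mem : ∀ i ∈ A, i ∉ B := fun _ hiA => Finset.disjoint_left.1 h.1 hiA
  have hqc : |q * c| < c := by
    rw [abs_mul, abs_of_pos hc]
    exact mul_lt_of_lt_one_left hc hq_lt
  obtain ⟨hq_gt_neg, hq_lt_pos⟩ := abs_lt.1 hqc
  refine ⟨fun i => if i ∈ A then c else if i ∈ B then -c else q * c, ?_, fun i => ?_, fun i => ?_,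
    fun i => ?_⟩
  · calc
      _ = ∑ i, ((if i ∈ A then c else 0) - (if i ∈ B then c else 0) +
            if i ∈ (A ∪ B)ᶜ then q * c else 0) := by
          refine Finset.sum_congr rfl fun i _ => ?_
          have := hdisj_mem i
          by_cases hiA : i ∈ A <;> by_cases hiB : i ∈ B <;> simp_all
      _ = (A.card - B.card + (A ∪ B)ᶜ.card * q) * c := by
          simp only [Finset.sum_add_distrib, Finset.sum_sub_distrib, Finset.sum_ite_mem,
            Finset.univ_inter, Finset.sum_const, nsmul_eq_mul]
          ring
      _ = 0 := by rw [hq_sum, zero_mul]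
  · grind
  · grind
  · grind

theorem isBalanced_iff_exists_weight {c : ℝ} (hc : 0 < c) :
    IsBalanced A B ↔ ∃ g : ι → ℝ, ∑ i, g i = 0 ∧ (∀ i, |g i| ≤ c) ∧ (∀ i, i ∈ A ↔ g i = c) ∧
      ∀ i, i ∈ B ↔ g i = -c :=
  ⟨fun h => h.exists_weight hc, fun ⟨_, hsum, hg, hA, hB⟩ => isBalanced_of_weight hc hsum hg hA hB⟩

end Balanced

section SignedHull

variable {ι E : Type*} [AddCommGroup E] [Module ℝ E] {f : ι → E} {l : E →ₗ[ℝ] ℝ} {c : ℝ}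

/-- The convex hull of the vectors `f i` with `i ∈ A` and `-f i` with `i ∈ B`. With both index sets
equal to `Set.univ` this is the centrally symmetric polytope on `f`, and its proper faces are again
of this form. -/
def signedHull (f : ι → E) (A B : Set ι) : Set E :=
  convexHull ℝ (f '' A ∪ (-f) '' B)

theorem mem_signedHull {A B : Set ι} {i : ι} (hi : i ∈ A) : f i ∈ signedHull f A B :=
  subset_convexHull ℝ _ (.inl ⟨i, hi, rfl⟩)

theorem neg_mem_signedHull {A B : Set ι} {i : ι} (hi : i ∈ B) : -f i ∈ signedHull f A B :=
  subset_convexHull ℝ _ (.inr ⟨i, hi, rfl⟩)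

theorem signedHull_univ_le_iff :
    (∀ x ∈ signedHull f Set.univ Set.univ, l x ≤ c) ↔ ∀ i, |l (f i)| ≤ c := by
  refine ⟨fun h i => abs_le'.2 ⟨h _ (mem_signedHull trivial), ?_⟩, fun h x hx => ?_⟩
  · simpa using h _ (neg_mem_signedHull (i := i) trivial)
  · refine convexHull_min ?_ (convex_halfSpace_le l.isLinear c) hx
    rintro _ (⟨i, -, rfl⟩ | ⟨i, -, rfl⟩)
    · exact (abs_le'.1 (h i)).1
    · simpa using (abs_le'.1 (h i)).2

theorem signedHull_univ_inter_hyperplane (h : ∀ i, |l (f i)| ≤ c) :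
    {x ∈ signedHull f Set.univ Set.univ | l x = c} =
      signedHull f {i | l (f i) = c} {i | l (f i) = -c} := by
  have hle := signedHull_univ_le_iff.2 h
  rw [signedHull, convexHull_inter_hyperplane_of_le fun v hv => hle v (subset_convexHull ℝ _ hv),
    signedHull]
  congr 1
  ext v
  simp only [Set.mem_union, Set.mem_image, Set.mem_ofPred_eq]
  grind [Pi.neg_apply]

theorem span_image_union_neg_image (A B : Set ι) :
    Submodule.span ℝ (f '' A ∪ (-f) '' B) = Submodule.span ℝ (f '' (A ∪ B)) := by
  have hneg : (-f) '' B = -(f '' B) := by rw [← Set.image_neg_eq_neg, Set.image_image]; rfl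
  rw [hneg, Submodule.span_union, Submodule.span_neg, ← Submodule.span_union, Set.image_union]

end SignedHull

namespace IsZeroSumCircuit

section

variable {ι E : Type*} [Fintype ι] [AddCommGroup E] [Module ℝ E] {f : ι → E} {A B : Finset ι}

theorem isBalanced_iff_exists_linearMap (hf : IsZeroSumCircuit f) {c : ℝ} (hc : 0 < c) :
    IsBalanced A B ↔ ∃ l : E →ₗ[ℝ] ℝ, (∀ i, |l (f i)| ≤ c) ∧ (∀ i, i ∈ A ↔ l (f i) = c) ∧
      ∀ i, i ∈ B ↔ l (f i) = -c := by
  rw [isBalanced_iff_exists_weight hc]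
  constructor
  · rintro ⟨g, hsum, hg⟩
    obtain ⟨l, hl⟩ := (hf.exists_linearMap_apply_eq_iff g).2 hsum
    exact ⟨l, by simpa only [hl] using hg⟩
  · rintro ⟨l, hl⟩
    exact ⟨fun i => l (f i), (hf.exists_linearMap_apply_eq_iff _).1 ⟨l, fun _ => rfl⟩, hl⟩

theorem exists_supporting_linearMap (hf : IsZeroSumCircuit f) (h : IsBalanced A B) :
    ∃ l : E →ₗ[ℝ] ℝ, (∀ x ∈ signedHull f Set.univ Set.univ, l x ≤ 1) ∧
      signedHull f A B = {x ∈ signedHull f Set.univ Set.univ | l x = 1} ∧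
      (∀ i, i ∈ A ↔ l (f i) = 1) ∧ ∀ i, i ∈ B ↔ l (f i) = -1 := by
  obtain ⟨l, hl, hA, hB⟩ := (hf.isBalanced_iff_exists_linearMap one_pos).1 h
  refine ⟨l, signedHull_univ_le_iff.2 hl, ?_, hA, hB⟩
  rw [signedHull_univ_inter_hyperplane hl]
  congr 1 <;> ext i
  exacts [hA i, hB i]

theorem mem_signedHull_iff (hf : IsZeroSumCircuit f) (h : IsBalanced A B) (i : ι) :
    f i ∈ signedHull f A B ↔ i ∈ A := by
  obtain ⟨l, -, hface, hA, -⟩ := hf.exists_supporting_linearMap h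
  rw [hface, hA]
  exact and_iff_right (mem_signedHull trivial)

theorem neg_mem_signedHull_iff (hf : IsZeroSumCircuit f) (h : IsBalanced A B) (i : ι) :
    -f i ∈ signedHull f A B ↔ i ∈ B := by
  obtain ⟨l, -, hface, -, hB⟩ := hf.exists_supporting_linearMap h
  rw [hface, hB, ← neg_eq_iff_eq_neg, ← map_neg]
  exact and_iff_right (neg_mem_signedHull trivial)

theorem injOn_signedHull (hf : IsZeroSumCircuit f) :
    Set.InjOn (fun p : Finset ι × Finset ι => signedHull f p.1 p.2)
      {p | IsBalanced p.1 p.2} := by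
  rintro ⟨A, B⟩ h ⟨A', B'⟩ h' (heq : signedHull f A B = signedHull f A' B')
  ext i
  · exact (hf.mem_signedHull_iff h i).symm.trans (heq ▸ hf.mem_signedHull_iff h' i)
  · exact (hf.neg_mem_signedHull_iff h i).symm.trans (heq ▸ hf.neg_mem_signedHull_iff h' i)

end

variable {ι V : Type*} [Fintype ι] [Nonempty ι] {f : ι → V → ℝ} {A B : Finset ι}

theorem isFaceOf_signedHull_univ_iff (hf : IsZeroSumCircuit f) {F : Set (V → ℝ)} :
    IsFaceOf F (signedHull f Set.univ Set.univ) ↔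
      F = signedHull f Set.univ Set.univ ∨
        ∃ A B : Finset ι, IsBalanced A B ∧ F = signedHull f A B := by
  classical
  refine or_congr_right' fun hF => ⟨?_, ?_⟩
  · rintro ⟨l, c, hle, rfl⟩
    have habs := signedHull_univ_le_iff.1 hle
    rw [signedHull_univ_inter_hyperplane habs] at hF ⊢
    have hc : 0 < c := by
      refine ((abs_nonneg _).trans (habs (Classical.arbitrary ι))).lt_of_ne ?_
      rintro rfl
      have hl : ∀ i, l (f i) = 0 := fun i => abs_nonpos_iff.1 (habs i)
      simp [hl] at hF
    refine ⟨({i | l (f i) = c} : Finset ι), ({i | l (f i) = -c} : Finset ι),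
      (hf.isBalanced_iff_exists_linearMap hc).2 ⟨l, habs, by simp, by simp⟩, by simp⟩
  · rintro ⟨A, B, h, rfl⟩
    obtain ⟨l, hle, hface, -⟩ := hf.exists_supporting_linearMap h
    exact ⟨l, 1, hle, hface⟩

theorem polyDim_signedHull_univ (hf : IsZeroSumCircuit f) :
    polyDim (signedHull f Set.univ Set.univ) = (Fintype.card ι : ℤ) - 1 := by
  have hneg : ∀ x ∈ f '' Set.univ ∪ (-f) '' Set.univ, -x ∈ f '' Set.univ ∪ (-f) '' Set.univ := by
    rintro _ (⟨i, -, rfl⟩ | ⟨i, -, rfl⟩)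
    · exact .inr ⟨i, trivial, rfl⟩
    · exact .inl ⟨i, trivial, (neg_neg _).symm⟩
  rw [signedHull, polyDim_convexHull ((Set.univ_nonempty.image f).inl),
    vectorSpan_eq_span_of_neg_mem hneg, span_image_union_neg_image, Set.union_self, Set.image_univ,
    ← hf.finrank_span_range]
  push_cast
  ring

theorem polyDim_signedHull (hf : IsZeroSumCircuit f) (h : IsBalanced A B) :
    polyDim (signedHull f A B) = (min (A.card + B.card) (Fintype.card ι - 1) : ℕ) - 1 := by
  classical
  obtain ⟨l, -, hface, -⟩ := hf.exists_supporting_linearMap h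
  have hl : ∀ x ∈ f '' A ∪ (-f) '' B, l x = 1 := fun x hx =>
    (hface.subset (subset_convexHull ℝ _ hx)).2
  have : FiniteDimensional ℝ (Submodule.span ℝ (f '' (A : Set ι) ∪ (-f) '' (B : Set ι))) :=
    FiniteDimensional.span_of_finite ℝ ((A.finite_toSet.image f).union (B.finite_toSet.image (-f)))
  rw [signedHull, polyDim_convexHull_of_forall_eq_one hl, span_image_union_neg_image,
    ← Finset.coe_union, hf.finrank_span_image, Finset.card_union_of_disjoint h.1]

theorem card_faces (hf : IsZeroSumCircuit f) {d : ℤ} (hd : d ≠ Fintype.card ι - 1) :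
    Nat.card {F // IsFaceOf F (signedHull f Set.univ Set.univ) ∧ polyDim F = d} =
      {p : Finset ι × Finset ι | IsBalanced p.1 p.2 ∧
        ((min (p.1.card + p.2.card) (Fintype.card ι - 1) : ℕ) : ℤ) - 1 = d}.ncard := by
  rw [← (hf.injOn_signedHull.mono fun p hp => hp.1).ncard_image, ← Nat.card_coe_set_eq]
  congr 2
  ext F
  constructor
  · rintro ⟨hF, hdim⟩
    rcases hf.isFaceOf_signedHull_univ_iff.1 hF with rfl | ⟨A, B, h, rfl⟩
    · exact absurd (hdim.symm.trans hf.polyDim_signedHull_univ) hd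
    · exact ⟨(A, B), ⟨h, (hf.polyDim_signedHull h).symm.trans hdim⟩, rfl⟩
  · rintro ⟨⟨A, B⟩, ⟨h, hdim⟩, rfl⟩
    exact ⟨hf.isFaceOf_signedHull_univ_iff.2 (.inr ⟨A, B, h, rfl⟩),
      (hf.polyDim_signedHull h).trans hdim⟩

end IsZeroSumCircuit

theorem ncard_disjoint_pairs (ι : Type*) [Fintype ι] (k : ℕ) :
    {p : Finset ι × Finset ι | Disjoint p.1 p.2 ∧ p.1.card + p.2.card = k}.ncard =
      (Fintype.card ι).choose k * 2 ^ k := by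
  classical
  calc
    _ = ((Finset.univ.powersetCard k).sigma fun T : Finset ι => T.powerset).card := by
      rw [← Set.ncard_coe_finset]
      refine Set.ncard_congr (fun p _ => ⟨p.1 ∪ p.2, p.1⟩) ?_ ?_ ?_
      · rintro ⟨A, B⟩ ⟨hdisj, hcard⟩
        simp [Finset.card_union_of_disjoint hdisj, hcard]
      · rintro ⟨A, B⟩ ⟨A', B'⟩ ⟨hdisj, -⟩ ⟨hdisj', -⟩ heq
        obtain ⟨hunion, rfl⟩ : A ∪ B = A' ∪ B' ∧ A = A' := by simpa using heq
        have hsdiff := congrArg (· \ A) hunion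
        simp only [Finset.union_sdiff_cancel_left hdisj,
          Finset.union_sdiff_cancel_left hdisj'] at hsdiff
        rw [hsdiff]
      · rintro ⟨T, A⟩ hTA
        obtain ⟨hT, hA⟩ : T.card = k ∧ A ⊆ T := by simpa using hTA
        exact ⟨(A, T \ A), ⟨Finset.disjoint_sdiff, by
          rw [add_comm, Finset.card_sdiff_add_card_eq_card hA, hT]⟩, by
          simp [Finset.union_sdiff_of_subset hA]⟩
    _ = ∑ _T ∈ Finset.univ.powersetCard (α := ι) k, 2 ^ k := by
      rw [Finset.card_sigma]
      refine Finset.sum_congr rfl fun T hT => ?_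
      rw [Finset.card_powerset, (Finset.mem_powersetCard.1 hT).2]
    _ = (Fintype.card ι).choose k * 2 ^ k := by
      rw [Finset.sum_const, Finset.card_powersetCard, Finset.card_univ, smul_eq_mul]

namespace IsZeroSumCircuit

variable {ι V : Type*} [Fintype ι] [Nonempty ι] {f : ι → V → ℝ}

theorem card_faces_of_two_mul_lt (hf : IsZeroSumCircuit f) {d : ℕ}
    (hd : 2 * (d + 1) < Fintype.card ι) :
    Nat.card {F // IsFaceOf F (signedHull f Set.univ Set.univ) ∧ polyDim F = d} =
      (Fintype.card ι).choose (d + 1) * 2 ^ (d + 1) := by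
  rw [hf.card_faces (by omega), ← ncard_disjoint_pairs]
  congr 1
  ext ⟨A, B⟩
  simp only [IsBalanced, Set.mem_ofPred_eq, and_assoc]
  exact and_congr_right fun _ => by omega

theorem card_facets_of_even (hf : IsZeroSumCircuit f) {n : ℕ} (hn : Fintype.card ι = 2 * n) :
    Nat.card {F // IsFacetOf F (signedHull f Set.univ Set.univ)} = (2 * n).choose n := by
  classical
  simp only [IsFacetOf]
  rw [hf.card_faces (by rw [hf.polyDim_signedHull_univ]; omega), hf.polyDim_signedHull_univ]
  have hpairs : {p : Finset ι × Finset ι | IsBalanced p.1 p.2 ∧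
      ((min (p.1.card + p.2.card) (Fintype.card ι - 1) : ℕ) : ℤ) - 1 = Fintype.card ι - 1 - 1} =
      (fun A => (A, Aᶜ)) '' (Finset.univ.powersetCard n : Finset (Finset ι)) := by
    ext ⟨A, B⟩
    have hpos : 0 < Fintype.card ι := Fintype.card_pos
    constructor
    · rintro ⟨⟨hdisj, hcard⟩, hdim⟩
      dsimp only at hdisj hcard hdim
      have hA : A.card = n := by omega
      have hB : Aᶜ.card ≤ B.card := by
        rw [Finset.card_compl]
        omega
      obtain rfl :=
        Finset.eq_of_subset_of_card_le (Finset.subset_compl_iff_disjoint_left.2 hdisj) hB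
      exact ⟨A, by simp [hA], rfl⟩
    · rintro ⟨A, hA, ⟨⟩⟩
      have hA_card : A.card = n := by simpa using hA
      have hAc_card : Aᶜ.card = n := by
        rw [Finset.card_compl]
        omega
      refine ⟨⟨disjoint_compl_right, ?_⟩, ?_⟩ <;> dsimp only <;> omega
  rw [hpairs, Set.ncard_image_of_injective _ fun A A' h => congrArg Prod.fst h,
    Set.ncard_coe_finset, Finset.card_powersetCard, Finset.card_univ, hn]

end IsZeroSumCircuit

section Cycle

variable {m : ℕ}

/-- The vector `e_i - e_(i-1)` of the edge `{i - 1, i}` of the cycle graph on `ℤ/m`. -/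
def cycleEdgeVec (i : ZMod m) : ZMod m → ℝ :=
  epsVec (i, i - 1)

theorem DE_cycleDoubleEdges (m : ℕ) :
    DE (cycleDoubleEdges m) = signedHull cycleEdgeVec Set.univ Set.univ := by
  have hneg : ∀ i : ZMod m, -cycleEdgeVec i = epsVec (i - 1, i) := fun i => by
    funext u
    simp [cycleEdgeVec, epsVec]
  rw [DE, signedHull]
  congr 1
  ext v
  constructor
  · rintro ⟨⟨a, b⟩, hab | hab, rfl⟩
    · obtain rfl : b = a - 1 := by simp [← show a - b = 1 from hab]
      exact .inl ⟨a, trivial, rfl⟩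
    · obtain rfl : a = b - 1 := by simp [← show b - a = 1 from hab]
      exact .inr ⟨b, trivial, hneg b⟩
  · rintro (⟨i, -, rfl⟩ | ⟨i, -, rfl⟩)
    · exact ⟨(i, i - 1), .inl (sub_sub_cancel i 1), rfl⟩
    · exact ⟨(i - 1, i), .inr (sub_sub_cancel i 1), (hneg i).symm⟩

theorem sum_smul_cycleEdgeVec_apply [NeZero m] (c : ZMod m → ℝ) (u : ZMod m) :
    (∑ i, c i • cycleEdgeVec i) u = c u - c (u + 1) := by
  simp [cycleEdgeVec, epsVec, mul_sub, Finset.sum_sub_distrib, eq_sub_iff_add_eq]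

theorem isZeroSumCircuit_cycleEdgeVec [NeZero m] :
    IsZeroSumCircuit (cycleEdgeVec : ZMod m → ZMod m → ℝ) := by
  ext c
  rw [LinearMap.mem_ker, Fintype.linearCombination_apply, Submodule.mem_span_singleton]
  constructor
  · intro hc
    have hperiodic : Function.Periodic c 1 := fun u => by
      rw [eq_comm, ← sub_eq_zero, ← sum_smul_cycleEdgeVec_apply, hc, Pi.zero_apply]
    refine ⟨c 0, funext fun i => ?_⟩
    simpa using (hperiodic.nat_mul_eq i.val).symm
  · rintro ⟨a, rfl⟩
    ext u
    rw [sum_smul_cycleEdgeVec_apply]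
    simp

end Cycle

/-- Dimension, facet numbers and face numbers of the symmetric edge polytope of an even
cycle `C_{2n}`. -/
theorem faces_of_even_cycle (n : ℕ) (hn : 2 ≤ n) :
    polyDim (DE (cycleDoubleEdges (2 * n))) = 2 * (n : ℤ) - 1 ∧
    Nat.card {F : Set (ZMod (2 * n) → ℝ) // IsFacetOf F (DE (cycleDoubleEdges (2 * n)))} =
      Nat.choose (2 * n) n ∧
    ∀ d : ℕ, d + 1 < n →
      Nat.card {F : Set (ZMod (2 * n) → ℝ) //
          IsFaceOf F (DE (cycleDoubleEdges (2 * n))) ∧ polyDim F = (d : ℤ)} =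
        Nat.choose (2 * n) (d + 1) * 2 ^ (d + 1) := by
  have : NeZero (2 * n) := ⟨by omega⟩
  have hcircuit := isZeroSumCircuit_cycleEdgeVec (m := 2 * n)
  have hcard : Fintype.card (ZMod (2 * n)) = 2 * n := ZMod.card (2 * n)
  rw [DE_cycleDoubleEdges]
  refine ⟨?_, hcircuit.card_facets_of_even hcard, fun d hd => ?_⟩
  · rw [hcircuit.polyDim_signedHull_univ, hcard]
    push_cast
    rfl
  · rw [hcircuit.card_faces_of_two_mul_lt (by omega), hcard]
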